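/- arXiv:2503.03933 — 2 statements merged into one kernel-verified Lean document; each statement's English description precedes it below -/
import Mathlib

section
/- Let α > 1, r = (1/2)(1 - 1/α), positive integers a ≤ b with s = a + b ≥ 2, and n_* = ⌊-log_r a⌋ + 1. If the even integer k satisfies k ≥ max{ ⌈2(1-r+r^{n_*})^{a-1}[b(1-r+r^{n_*})+a] / ((1-r)^{a-1}(1-r^{n_*})^{b-1}[b(1-r)+a(1-r^{n_*})]) + 2⌉·((1-r)/r)^a, 2((1-r)/r)^{a+1}, 2(1/(1-r))^{s-1} + 2 }, then [0, k/2] = { x₁^a x₂^b + x₃^a x₄^b + ⋯ + x_{k-1}^a x_k^b : x₁,…,x_k ∈ C_α }. -/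
/-- The `n`-th stage of the Cantor construction with ratio `r`:
`C_0 = [0,1]`, `C_{n+1} = f₀(C_n) ∪ f₁(C_n)` with `f₀ x = r x`, `f₁ x = r x + (1-r)`. -/
def preCantorR (r : ℝ) : ℕ → Set ℝ
  | 0 => Set.Icc 0 1
  | n + 1 =>
      (fun x => r * x) '' preCantorR r n ∪ (fun x => r * x + (1 - r)) '' preCantorR r n

/-- The generalized Cantor set with contraction ratio `r`. -/
def cantorSetR (r : ℝ) : Set ℝ := ⋂ n, preCantorR r n

/-- The classical Cantor ternary set. -/
def cantorTernary : Set ℝ := cantorSetR (1/3)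

/-- `pairSum a b m x = ∑_{i=1}^{m} x_{2i-1}^a x_{2i}^b` (0-indexed), i.e. the
non-diagonal form `f_{k,a,b}` with `k = 2m`. -/
def pairSum (a b m : ℕ) (x : ℕ → ℝ) : ℝ :=
  ∑ i ∈ Finset.range m, x (2 * i) ^ a * x (2 * i + 1) ^ b

/-- The image `f_{k,a,b}(S^k)` with `k = 2m`. -/
def imageOn (a b m : ℕ) (S : Set ℝ) : Set ℝ :=
  {y | ∃ x : ℕ → ℝ, (∀ i, x i ∈ S) ∧ y = pairSum a b m x}

/-- `n_* = ⌊-log_r a⌋ + 1`. -/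
noncomputable def nstar (r : ℝ) (a : ℕ) : ℤ := ⌊-Real.logb r a⌋ + 1

/-- Left endpoint of the basic interval with address `w`. -/
def basicLeft (r : ℝ) : List Bool → ℝ
  | [] => 0
  | c :: w => r * basicLeft r w + if c then 1 - r else 0

/-- Left endpoint of the gap removed from the basic interval with address `w`. -/
def gapLeft (r : ℝ) (w : List Bool) : ℝ := basicLeft r w + r * r ^ w.length

/-- Right endpoint of the gap removed from the basic interval with address `w`. -/
def gapRight (r : ℝ) (w : List Bool) : ℝ := basicLeft r w + (1 - r) * r ^ w.length

/-- Right endpoint of the basic interval with address `w`. -/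
def basicRight (r : ℝ) (w : List Bool) : ℝ := basicLeft r w + r ^ w.length

/-- The length of the image under `x ↦ x ^ a` of the gap with address `w`. -/
def gapPowLength (r : ℝ) (a : ℕ) (w : List Bool) : ℝ := gapRight r w ^ a - gapLeft r w ^ a

/-- The unit interval with the gaps indexed by `s` removed. -/
def gapComplement (r : ℝ) (s : Finset (List Bool)) : Set ℝ :=
  {x | x ∈ Set.Icc (0 : ℝ) 1 ∧ ∀ w ∈ s, x ≤ gapLeft r w ∨ gapRight r w ≤ x}

theorem basicLeft_nonneg {r : ℝ} (h0 : 0 < r) (h1 : r < 1 / 2) (w : List Bool) :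
    0 ≤ basicLeft r w := by
  induction w with
  | nil => simp [basicLeft]
  | cons c w ih =>
    have := mul_nonneg h0.le ih
    cases c <;> simp only [basicLeft] <;> simp <;> linarith

theorem basicRight_le_one {r : ℝ} (h0 : 0 < r) (h1 : r < 1 / 2) (w : List Bool) :
    basicRight r w ≤ 1 := by
  induction w with
  | nil => simp [basicRight, basicLeft]
  | cons c w ih =>
    have := mul_le_mul_of_nonneg_left ih h0.le
    simp only [basicRight] at this
    cases c <;> simp only [basicRight, basicLeft, List.length_cons, pow_succ] <;> simp <;> linarith

theorem basicLeft_le_gapLeft {r : ℝ} (h0 : 0 < r) (w : List Bool) :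
    basicLeft r w ≤ gapLeft r w := by
  have : 0 < r * r ^ w.length := by positivity
  simp only [gapLeft]; linarith

theorem gapLeft_lt_gapRight {r : ℝ} (h0 : 0 < r) (h1 : r < 1 / 2) (w : List Bool) :
    gapLeft r w < gapRight r w := by
  have : 0 < r ^ w.length := by positivity
  simp only [gapLeft, gapRight]; nlinarith

theorem gapRight_le_basicRight {r : ℝ} (h0 : 0 < r) (w : List Bool) :
    gapRight r w ≤ basicRight r w := by
  have : 0 < r * r ^ w.length := by positivity
  simp only [basicRight, gapRight]; linarith

theorem gapLeft_nonneg {r : ℝ} (h0 : 0 < r) (h1 : r < 1 / 2) (w : List Bool) :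
    0 ≤ gapLeft r w :=
  (basicLeft_nonneg h0 h1 w).trans (basicLeft_le_gapLeft h0 w)

theorem gapRight_le_one {r : ℝ} (h0 : 0 < r) (h1 : r < 1 / 2) (w : List Bool) :
    gapRight r w ≤ 1 :=
  (gapRight_le_basicRight h0 w).trans (basicRight_le_one h0 h1 w)

/-- `GapPrecedes r v w`: the gap `v` lies to the left of the gap `w`, and between them lies the
left child of the basic interval `w` or the right child of the basic interval `v`. -/
def GapPrecedes (r : ℝ) (v w : List Bool) : Prop :=
  gapRight r v ≤ basicLeft r w ∨ basicRight r v ≤ gapLeft r w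

theorem GapPrecedes.cons {r : ℝ} (h0 : 0 < r) {v w : List Bool} (h : GapPrecedes r v w)
    (c : Bool) : GapPrecedes r (c :: v) (c :: w) := by
  unfold GapPrecedes at *
  simp only [gapRight, gapLeft, basicRight, basicLeft, List.length_cons, pow_succ] at *
  rcases h with h | h
  · left; nlinarith [mul_le_mul_of_nonneg_left h h0.le]
  · right; nlinarith [mul_le_mul_of_nonneg_left h h0.le]

theorem basicRight_false_le {r : ℝ} (h0 : 0 < r) (h1 : r < 1 / 2) (w : List Bool) :
    basicRight r (false :: w) ≤ r := by
  have := mul_le_mul_of_nonneg_left (basicRight_le_one h0 h1 w) h0.le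
  simp only [basicRight, basicLeft, List.length_cons, pow_succ] at *
  simp; linarith

theorem le_basicLeft_true {r : ℝ} (h0 : 0 < r) (h1 : r < 1 / 2) (w : List Bool) :
    1 - r ≤ basicLeft r (true :: w) := by
  have := mul_nonneg h0.le (basicLeft_nonneg h0 h1 w)
  simp only [basicLeft]
  simp; linarith

theorem gapPrecedes_or_gapPrecedes {r : ℝ} (h0 : 0 < r) (h1 : r < 1 / 2) :
    ∀ v w : List Bool, v ≠ w → GapPrecedes r v w ∨ GapPrecedes r w v := by
  have nil_true (w) : GapPrecedes r [] (true :: w) := by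
    left; simpa [gapRight, basicLeft] using le_basicLeft_true h0 h1 w
  have false_nil (w) : GapPrecedes r (false :: w) [] := by
    right; simpa [gapLeft, basicLeft] using basicRight_false_le h0 h1 w
  have false_true (v w) : GapPrecedes r (false :: v) (true :: w) := by
    right
    linarith [basicRight_false_le h0 h1 v, le_basicLeft_true h0 h1 w,
      basicLeft_le_gapLeft h0 (true :: w)]
  intro v
  induction v with
  | nil =>
    intro w h
    match w with
    | [] => exact absurd rfl h
    | true :: w => exact .inl (nil_true w)
    | false :: w => exact .inr (false_nil w)
  | cons c v ih =>
    intro w h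
    match c, w with
    | true, [] => exact .inr (nil_true v)
    | false, [] => exact .inl (false_nil v)
    | false, true :: w => exact .inl (false_true v w)
    | true, false :: w => exact .inr (false_true w v)
    | true, true :: w => exact (ih w (by simpa using h)).imp (·.cons h0 _) (·.cons h0 _)
    | false, false :: w => exact (ih w (by simpa using h)).imp (·.cons h0 _) (·.cons h0 _)

theorem GapPrecedes.gapRight_le_gapLeft {r : ℝ} (h0 : 0 < r) {v w : List Bool}
    (h : GapPrecedes r v w) : gapRight r v ≤ gapLeft r w :=
  h.elim (·.trans (basicLeft_le_gapLeft h0 w)) (gapRight_le_basicRight h0 v).trans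

theorem add_pow_sub_pow_mono {s t h : ℝ} (hs : 0 ≤ s) (hst : s ≤ t) (hh : 0 ≤ h) (a : ℕ) :
    (s + h) ^ a - s ^ a ≤ (t + h) ^ a - t ^ a := by
  induction a with
  | zero => simp
  | succ a ih =>
    have e (z : ℝ) : (z + h) ^ (a + 1) - z ^ (a + 1)
        = (z + h) * ((z + h) ^ a - z ^ a) + h * z ^ a := by ring
    rw [e, e]
    have : 0 ≤ (s + h) ^ a - s ^ a := sub_nonneg.2 (pow_le_pow_left₀ hs (by linarith) a)
    gcongr
    linarith

/-- The left child of a basic interval is, after `x ↦ x ^ a`, not too short compared to the gap;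
the extreme case is the basic interval `[0, 1]`. -/
theorem gapPowLength_le_left {r : ℝ} (h0 : 0 < r) (h1 : r < 1 / 2) {a : ℕ} {m : ℝ}
    (hm : ((1 - r) / r) ^ a ≤ m) (w : List Bool) :
    gapPowLength r a w ≤ (m - 1) * (gapLeft r w ^ a - basicLeft r w ^ a) := by
  have hu := basicLeft_nonneg h0 h1 w
  have hl : 0 < r ^ w.length := by positivity
  simp only [gapPowLength, gapRight, gapLeft]
  generalize basicLeft r w = u at *
  generalize r ^ w.length = l at *
  have hA : 0 ≤ (1 - r) * l := mul_nonneg (by linarith) hl.le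
  have hB : 0 < r * l := by positivity
  have key : (r * l) ^ a * ((u + (1 - r) * l) ^ a - u ^ a)
      ≤ ((1 - r) * l) ^ a * ((u + r * l) ^ a - u ^ a) := by
    have := add_pow_sub_pow_mono (s := u * (r * l)) (t := u * ((1 - r) * l))
      (h := (r * l) * ((1 - r) * l)) (by positivity)
      (by gcongr; linarith) (by positivity) a
    rw [mul_sub, mul_sub, ← mul_pow, ← mul_pow, ← mul_pow, ← mul_pow]
    ring_nf at this ⊢
    linarith
  have hpos : 0 < (r * l) ^ a := by positivity
  have hL : 0 ≤ (u + r * l) ^ a - u ^ a :=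
    sub_nonneg.2 (pow_le_pow_left₀ hu (by linarith) a)
  have hm' : ((1 - r) * l) ^ a ≤ (r * l) ^ a * m := by
    rw [mul_pow, mul_pow]
    rw [div_pow, div_le_iff₀ (by positivity)] at hm
    have : 0 < l ^ a := by positivity
    nlinarith
  have : (r * l) ^ a * ((u + (1 - r) * l) ^ a - u ^ a)
      ≤ (r * l) ^ a * (m * ((u + r * l) ^ a - u ^ a)) := by
    rw [← mul_assoc]
    exact key.trans (mul_le_mul_of_nonneg_right hm' hL)
  have := le_of_mul_le_mul_left this hpos
  linarith

theorem gapPowLength_le_right {r : ℝ} (h0 : 0 < r) (h1 : r < 1 / 2) {a : ℕ} {m : ℝ}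
    (hm1 : 1 ≤ m) (hm : ((1 - r) / r) ^ a ≤ m) (w : List Bool) :
    gapPowLength r a w ≤ (m - 1) * (basicRight r w ^ a - gapRight r w ^ a) := by
  refine (gapPowLength_le_left h0 h1 hm w).trans (mul_le_mul_of_nonneg_left ?_ (by linarith))
  have hl : 0 < r ^ w.length := by positivity
  have := add_pow_sub_pow_mono (s := basicLeft r w) (t := gapRight r w) (h := r * r ^ w.length)
    (basicLeft_nonneg h0 h1 w) (by simp only [gapRight]; nlinarith) (by positivity) a
  rwa [show gapRight r w + r * r ^ w.length = basicRight r w by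
    simp only [basicRight, gapRight]; ring] at this

/-- Every point of `gapComplement r s` lies in an interval of `gapComplement r s` that is long
compared to any gap which is no longer than those in `s`. -/
theorem exists_Icc_subset_gapComplement {r : ℝ} (h0 : 0 < r) (h1 : r < 1 / 2) {a : ℕ} {m : ℝ}
    (hm1 : 1 ≤ m) (hm : ((1 - r) / r) ^ a ≤ m) (s : Finset (List Bool)) (w₀ : List Bool)
    (hw₀ : ∀ w ∈ s, gapPowLength r a w₀ ≤ gapPowLength r a w) {x : ℝ}
    (hx : x ∈ gapComplement r s) :
    ∃ c d, c ≤ x ∧ x ≤ d ∧ Set.Icc c d ⊆ gapComplement r s ∧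
      gapPowLength r a w₀ ≤ (m - 1) * (d ^ a - c ^ a) := by
  classical
  obtain ⟨⟨hx0, hx1⟩, hxs⟩ := hx
  have hm' : 0 ≤ m - 1 := by linarith
  have hleft : ∃ c, 0 ≤ c ∧ c ≤ x ∧ (∀ w ∈ s, gapRight r w ≤ x → gapRight r w ≤ c) ∧
      (c = 0 ∨ ∃ v ∈ s, c = gapRight r v) := by
    obtain ⟨c, hc, hmax⟩ := (insert 0 ((s.image (gapRight r)).filter (· ≤ x))).exists_max_image id
      ⟨0, by simp⟩
    refine ⟨c, hmax 0 (by simp), ?_, fun w hw hwx => hmax _ ?_, ?_⟩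
    · simp only [Finset.mem_insert, Finset.mem_filter] at hc
      rcases hc with rfl | hc
      exacts [hx0, hc.2]
    · simp only [Finset.mem_insert, Finset.mem_filter, Finset.mem_image]
      exact .inr ⟨⟨w, hw, rfl⟩, hwx⟩
    · simp only [Finset.mem_insert, Finset.mem_filter, Finset.mem_image] at hc
      rcases hc with hc | ⟨⟨v, hv, rfl⟩, -⟩
      exacts [.inl hc, .inr ⟨v, hv, rfl⟩]
  have hright : ∃ d, d ≤ 1 ∧ x ≤ d ∧ (∀ w ∈ s, x ≤ gapLeft r w → d ≤ gapLeft r w) ∧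
      (d = 1 ∨ ∃ v ∈ s, d = gapLeft r v) := by
    obtain ⟨d, hd, hmin⟩ := (insert 1 ((s.image (gapLeft r)).filter (x ≤ ·))).exists_min_image id
      ⟨1, by simp⟩
    refine ⟨d, hmin 1 (by simp), ?_, fun w hw hwx => hmin _ ?_, ?_⟩
    · simp only [Finset.mem_insert, Finset.mem_filter] at hd
      rcases hd with rfl | hd
      exacts [hx1, hd.2]
    · simp only [Finset.mem_insert, Finset.mem_filter, Finset.mem_image]
      exact .inr ⟨⟨w, hw, rfl⟩, hwx⟩
    · simp only [Finset.mem_insert, Finset.mem_filter, Finset.mem_image] at hd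
      rcases hd with hd | ⟨⟨v, hv, rfl⟩, -⟩
      exacts [.inl hd, .inr ⟨v, hv, rfl⟩]
  obtain ⟨c, hc0, hcx, hcs, hc⟩ := hleft
  obtain ⟨d, hd1, hxd, hds, hd⟩ := hright
  have of_left (w) (hw : gapPowLength r a w₀ ≤ gapPowLength r a w) (hcw : c ≤ basicLeft r w)
      (hdw : gapLeft r w ≤ d) : gapPowLength r a w₀ ≤ (m - 1) * (d ^ a - c ^ a) := by
    refine hw.trans ((gapPowLength_le_left h0 h1 hm w).trans ?_)
    have := pow_le_pow_left₀ hc0 hcw a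
    have := pow_le_pow_left₀ (gapLeft_nonneg h0 h1 w) hdw a
    exact mul_le_mul_of_nonneg_left (by linarith) hm'
  have of_right (w) (hw : gapPowLength r a w₀ ≤ gapPowLength r a w) (hcw : c ≤ gapRight r w)
      (hdw : basicRight r w ≤ d) : gapPowLength r a w₀ ≤ (m - 1) * (d ^ a - c ^ a) := by
    refine hw.trans ((gapPowLength_le_right h0 h1 hm1 hm w).trans ?_)
    have := pow_le_pow_left₀ hc0 hcw a
    have := pow_le_pow_left₀ ((gapLeft_nonneg h0 h1 w).trans
      ((gapLeft_lt_gapRight h0 h1 w).le.trans (gapRight_le_basicRight h0 w))) hdw a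
    exact mul_le_mul_of_nonneg_left (by linarith) hm'
  refine ⟨c, d, hcx, hxd, fun y hy => ⟨⟨hc0.trans hy.1, hy.2.trans hd1⟩, fun w hw => ?_⟩, ?_⟩
  · exact (hxs w hw).imp (fun h => hy.2.trans (hds w hw h)) (fun h => (hcs w hw h).trans hy.1)
  · rcases hc with rfl | ⟨v, hv, rfl⟩ <;> rcases hd with rfl | ⟨w, hw, rfl⟩
    · exact of_left w₀ le_rfl (basicLeft_nonneg h0 h1 _)
        ((gapLeft_lt_gapRight h0 h1 _).le.trans (gapRight_le_one h0 h1 _))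
    · exact of_left w (hw₀ w hw) (basicLeft_nonneg h0 h1 _) le_rfl
    · exact of_right v (hw₀ v hv) le_rfl (basicRight_le_one h0 h1 _)
    · have hle := hcx.trans hxd
      have hne : v ≠ w := by
        rintro rfl
        exact absurd (gapLeft_lt_gapRight h0 h1 v) (not_lt.2 hle)
      rcases gapPrecedes_or_gapPrecedes h0 h1 v w hne with h | h
      · rcases h with h | h
        · exact of_left w (hw₀ w hw) h le_rfl
        · exact of_right v (hw₀ v hv) le_rfl h
      · have := h.gapRight_le_gapLeft h0
        linarith [gapLeft_lt_gapRight h0 h1 v, gapLeft_lt_gapRight h0 h1 w]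

theorem exists_sum_pow_eq {ι : Type*} (s : Finset ι) (a : ℕ) {c d : ι → ℝ}
    (hcd : ∀ i, c i ≤ d i) {T : ℝ} (h1 : ∑ i ∈ s, c i ^ a ≤ T) (h2 : T ≤ ∑ i ∈ s, d i ^ a) :
    ∃ x : ι → ℝ, (∀ i, x i ∈ Set.Icc (c i) (d i)) ∧ ∑ i ∈ s, x i ^ a = T := by
  have hcont : ContinuousOn (fun t : ℝ => ∑ i ∈ s, (c i + t * (d i - c i)) ^ a)
      (Set.Icc 0 1) := by fun_prop
  obtain ⟨t, ht, hT⟩ := intermediate_value_Icc zero_le_one hcont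
    (show T ∈ Set.Icc _ _ from ⟨by simpa using h1, by simpa using h2⟩)
  refine ⟨fun i => c i + t * (d i - c i), fun i => ⟨?_, ?_⟩, hT⟩
  · nlinarith [mul_nonneg ht.1 (sub_nonneg.2 (hcd i))]
  · nlinarith [mul_nonneg (sub_nonneg.2 ht.2) (sub_nonneg.2 (hcd i))]

/-- Given intervals that are jointly longer than a gap `(p, q)`, a coordinate inside the gap can be
moved to one of its endpoints without changing the sum of powers. -/
theorem exists_sum_pow_eq_of_gap {ι : Type*} [DecidableEq ι] {s : Finset ι} {i₀ : ι}
    (hi₀ : i₀ ∈ s) {a : ℕ} {x c d : ι → ℝ} {p q : ℝ} (hp : 0 ≤ p) (hpx : p ≤ x i₀)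
    (hxq : x i₀ ≤ q) (hc : ∀ i, 0 ≤ c i) (hcx : ∀ i, c i ≤ x i) (hxd : ∀ i, x i ≤ d i)
    (hlen : q ^ a - p ^ a ≤ ∑ i ∈ s.erase i₀, (d i ^ a - c i ^ a)) :
    ∃ y : ι → ℝ, (y i₀ = p ∨ y i₀ = q) ∧ (∀ i ≠ i₀, y i ∈ Set.Icc (c i) (d i)) ∧
      ∑ i ∈ s, y i ^ a = ∑ i ∈ s, x i ^ a := by
  have move (z : ℝ) (h1 : ∑ i ∈ s.erase i₀, c i ^ a ≤ ∑ i ∈ s, x i ^ a - z ^ a)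
      (h2 : ∑ i ∈ s, x i ^ a - z ^ a ≤ ∑ i ∈ s.erase i₀, d i ^ a) :
      ∃ y : ι → ℝ, y i₀ = z ∧ (∀ i ≠ i₀, y i ∈ Set.Icc (c i) (d i)) ∧
        ∑ i ∈ s, y i ^ a = ∑ i ∈ s, x i ^ a := by
    obtain ⟨y, hy, hsum⟩ := exists_sum_pow_eq (s.erase i₀) a
      (fun i => (hcx i).trans (hxd i)) h1 h2
    refine ⟨Function.update y i₀ z, by simp, fun i hi => by simpa [hi] using hy i, ?_⟩
    rw [← Finset.add_sum_erase _ _ hi₀, Function.update_self,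
      Finset.sum_congr rfl (g := fun i => y i ^ a)
        (fun i hi => by rw [Function.update_of_ne (Finset.ne_of_mem_erase hi)]), hsum]
    ring
  have hx := Finset.add_sum_erase s (fun i => x i ^ a) hi₀
  have hcs : ∑ i ∈ s.erase i₀, c i ^ a ≤ ∑ i ∈ s.erase i₀, x i ^ a :=
    Finset.sum_le_sum fun i _ => pow_le_pow_left₀ (hc i) (hcx i) a
  have hds : ∑ i ∈ s.erase i₀, x i ^ a ≤ ∑ i ∈ s.erase i₀, d i ^ a :=
    Finset.sum_le_sum fun i _ => pow_le_pow_left₀ ((hc i).trans (hcx i)) (hxd i) a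
  have hpx' := pow_le_pow_left₀ hp hpx a
  have hxq' := pow_le_pow_left₀ (hp.trans hpx) hxq a
  rw [Finset.sum_sub_distrib] at hlen
  by_cases h : ∑ i ∈ s, x i ^ a - p ^ a ≤ ∑ i ∈ s.erase i₀, d i ^ a
  · obtain ⟨y, hy, hy'⟩ := move p (by linarith) h
    exact ⟨y, .inl hy, hy'⟩
  · obtain ⟨y, hy, hy'⟩ := move q (by linarith) (by linarith)
    exact ⟨y, .inr hy, hy'⟩

theorem gapLeft_mem_gapComplement {r : ℝ} (h0 : 0 < r) (h1 : r < 1 / 2)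
    (s : Finset (List Bool)) (w : List Bool) : gapLeft r w ∈ gapComplement r s := by
  have hw := gapLeft_lt_gapRight h0 h1 w
  refine ⟨⟨gapLeft_nonneg h0 h1 w, hw.le.trans (gapRight_le_one h0 h1 w)⟩, fun v _ => ?_⟩
  by_cases hne : v = w
  · exact .inl (hne ▸ le_rfl)
  · have hv := gapLeft_lt_gapRight h0 h1 v
    rcases gapPrecedes_or_gapPrecedes h0 h1 v w hne with h | h
    · exact .inr (h.gapRight_le_gapLeft h0)
    · exact .inl (hw.le.trans (h.gapRight_le_gapLeft h0))

theorem gapRight_mem_gapComplement {r : ℝ} (h0 : 0 < r) (h1 : r < 1 / 2)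
    (s : Finset (List Bool)) (w : List Bool) : gapRight r w ∈ gapComplement r s := by
  have hw := gapLeft_lt_gapRight h0 h1 w
  refine ⟨⟨(gapLeft_nonneg h0 h1 w).trans hw.le, gapRight_le_one h0 h1 w⟩, fun v _ => ?_⟩
  by_cases hne : v = w
  · exact .inr (hne ▸ le_rfl)
  · have hv := gapLeft_lt_gapRight h0 h1 v
    rcases gapPrecedes_or_gapPrecedes h0 h1 v w hne with h | h
    · exact .inr ((h.gapRight_le_gapLeft h0).trans hw.le)
    · exact .inl (h.gapRight_le_gapLeft h0)

theorem exists_sum_pow_eq_of_gapComplement {r : ℝ} (h0 : 0 < r) (h1 : r < 1 / 2) {a m : ℕ}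
    (hm2 : 2 ≤ m) (hm : ((1 - r) / r) ^ a ≤ m) {T : ℝ} (hT0 : 0 ≤ T) (hTm : T ≤ m)
    (ha : 0 < a) (s : Finset (List Bool)) :
    ∃ x : ℕ → ℝ, (∀ i, x i ∈ gapComplement r s) ∧ ∑ i ∈ Finset.range m, x i ^ a = T := by
  classical
  have hm1 : (1 : ℝ) ≤ m := by exact_mod_cast (by omega : 1 ≤ m)
  induction s using Finset.induction_on_max_value (fun w => -gapPowLength r a w) with
  | empty =>
    obtain ⟨x, hx, hsum⟩ := exists_sum_pow_eq (Finset.range m) a (c := fun _ => 0)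
      (d := fun _ => 1) (T := T) (fun _ => zero_le_one) (by simpa [ha.ne'] using hT0)
      (by simpa using hTm)
    exact ⟨x, fun i => ⟨hx i, by simp⟩, hsum⟩
  | insert w s hws hmin ih =>
    have hmin' : ∀ v ∈ insert w s, gapPowLength r a w ≤ gapPowLength r a v := by
      intro v hv
      rcases Finset.mem_insert.1 hv with rfl | hv
      exacts [le_rfl, neg_le_neg_iff.1 (hmin v hv)]
    have hsub : gapComplement r (insert w s) ⊆ gapComplement r s :=
      fun x hx => ⟨hx.1, fun v hv => hx.2 v (Finset.mem_insert_of_mem hv)⟩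
    have clear (t : Finset ℕ) (ht : t ⊆ Finset.range m) :
        ∃ x : ℕ → ℝ, (∀ i, x i ∈ gapComplement r s) ∧
          (∀ i ∈ t, x i ∈ gapComplement r (insert w s)) ∧
          ∑ i ∈ Finset.range m, x i ^ a = T := by
      induction t using Finset.induction_on with
      | empty =>
        obtain ⟨x, hx, hsum⟩ := ih
        exact ⟨x, hx, by simp, hsum⟩
      | insert i₀ t hi₀ iht =>
        obtain ⟨x, hx, hxt, hsum⟩ := iht ((Finset.subset_insert _ _).trans ht)
        by_cases hgap : x i₀ ≤ gapLeft r w ∨ gapRight r w ≤ x i₀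
        · refine ⟨x, hx, fun i hi => ?_, hsum⟩
          rcases Finset.mem_insert.1 hi with rfl | hi
          · refine ⟨(hx i).1, fun v hv => ?_⟩
            rcases Finset.mem_insert.1 hv with rfl | hv
            exacts [hgap, (hx i).2 v hv]
          · exact hxt i hi
        push Not at hgap
        have hbox (i : ℕ) : ∃ c d, c ≤ x i ∧ x i ≤ d ∧ Set.Icc c d ⊆ gapComplement r s ∧
            (i ∈ t → Set.Icc c d ⊆ gapComplement r (insert w s)) ∧
            gapPowLength r a w ≤ (m - 1) * (d ^ a - c ^ a) := by
          by_cases hi : i ∈ t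
          · obtain ⟨c, d, hc, hd, hcd, hlen⟩ :=
              exists_Icc_subset_gapComplement h0 h1 hm1 hm _ w hmin' (hxt i hi)
            exact ⟨c, d, hc, hd, hcd.trans hsub, fun _ => hcd, hlen⟩
          · obtain ⟨c, d, hc, hd, hcd, hlen⟩ :=
              exists_Icc_subset_gapComplement h0 h1 hm1 hm _ w
                (fun v hv => hmin' v (Finset.mem_insert_of_mem hv)) (hx i)
            exact ⟨c, d, hc, hd, hcd, fun h => absurd h hi, hlen⟩
        choose c d hcx hxd hcd hcdt hlen using hbox
        have hi₀m : i₀ ∈ Finset.range m := ht (Finset.mem_insert_self _ _)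
        have hm0 : (0 : ℝ) < m - 1 := by
          have : (2 : ℝ) ≤ m := by exact_mod_cast hm2
          linarith
        have hlen' : gapRight r w ^ a - gapLeft r w ^ a ≤
            ∑ i ∈ (Finset.range m).erase i₀, (d i ^ a - c i ^ a) := by
          have hsum_le := Finset.card_nsmul_le_sum ((Finset.range m).erase i₀)
            (fun i => d i ^ a - c i ^ a) (gapPowLength r a w / (m - 1))
            (fun i _ => by rw [div_le_iff₀ hm0]; linarith [hlen i])
          rw [Finset.card_erase_of_mem hi₀m, Finset.card_range, nsmul_eq_mul,
            Nat.cast_sub (by omega), Nat.cast_one, mul_div_cancel₀ _ hm0.ne'] at hsum_le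
          exact hsum_le
        obtain ⟨y, hy₀, hy, hysum⟩ := exists_sum_pow_eq_of_gap hi₀m
          (gapLeft_nonneg h0 h1 w) hgap.1.le hgap.2.le
          (fun i => (hcd i ⟨le_rfl, (hcx i).trans (hxd i)⟩).1.1) hcx hxd hlen'
        have hy₀' : y i₀ ∈ gapComplement r (insert w s) := by
          rcases hy₀ with h | h <;> rw [h]
          exacts [gapLeft_mem_gapComplement h0 h1 _ w, gapRight_mem_gapComplement h0 h1 _ w]
        refine ⟨y, fun i => ?_, fun i hi => ?_, hysum.trans hsum⟩
        · by_cases hi : i = i₀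
          · exact hsub (hi ▸ hy₀')
          · exact hcd i (hy i hi)
        · by_cases hii : i = i₀
          · exact hii ▸ hy₀'
          · exact hcdt i (Finset.mem_of_mem_insert_of_ne hi hii) (hy i hii)
    obtain ⟨x, -, hx, hsum⟩ := clear (Finset.range m) subset_rfl
    have hm0 : 0 ∈ Finset.range m := by simp; omega
    refine ⟨fun i => if i ∈ Finset.range m then x i else x 0, fun i => ?_, ?_⟩
    · dsimp only
      split_ifs with hi
      exacts [hx i hi, hx 0 hm0]
    · rw [← hsum]
      exact Finset.sum_congr rfl fun i hi => by dsimp only; rw [if_pos hi]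

theorem mem_preCantorR_of_forall_gap {r : ℝ} (h0 : 0 < r) (n : ℕ) {x : ℝ}
    (hx : x ∈ Set.Icc (0 : ℝ) 1)
    (hgap : ∀ w : List Bool, w.length < n → x ≤ gapLeft r w ∨ gapRight r w ≤ x) :
    x ∈ preCantorR r n := by
  induction n generalizing x with
  | zero => exact hx
  | succ n ih =>
    rcases hgap [] (by simp) with h | h
    · left
      simp only [gapLeft, basicLeft, List.length_nil, pow_zero] at h
      refine ⟨x / r, ih ⟨div_nonneg hx.1 h0.le, (div_le_one h0).2 (by linarith)⟩ fun w hw => ?_,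
        mul_div_cancel₀ x h0.ne'⟩
      refine (hgap (false :: w) (by simpa using hw)).imp (fun h => ?_) (fun h => ?_)
      · rw [div_le_iff₀ h0]
        simp [gapLeft, basicLeft, pow_succ] at h ⊢
        linarith
      · rw [le_div_iff₀ h0]
        simp [gapRight, basicLeft, pow_succ] at h ⊢
        linarith
    · right
      simp only [gapRight, basicLeft, List.length_nil, pow_zero] at h
      refine ⟨(x - (1 - r)) / r, ih ⟨div_nonneg (by linarith) h0.le,
        (div_le_one h0).2 (by linarith [hx.2])⟩ fun w hw => ?_, ?_⟩
      · refine (hgap (true :: w) (by simpa using hw)).imp (fun h => ?_) (fun h => ?_)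
        · rw [div_le_iff₀ h0]
          simp [gapLeft, basicLeft, pow_succ] at h ⊢
          linarith
        · rw [le_div_iff₀ h0]
          simp [gapRight, basicLeft, pow_succ] at h ⊢
          linarith
      · simp only [mul_div_cancel₀ _ h0.ne']; ring

theorem isCompact_preCantorR (r : ℝ) (n : ℕ) : IsCompact (preCantorR r n) := by
  induction n with
  | zero => exact isCompact_Icc
  | succ n ih => exact (ih.image (by fun_prop)).union (ih.image (by fun_prop))

theorem preCantorR_succ_subset {r : ℝ} (h0 : 0 < r) (h1 : r < 1 / 2) (n : ℕ) :
    preCantorR r (n + 1) ⊆ preCantorR r n := by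
  induction n with
  | zero =>
    rintro x (⟨y, ⟨hy0, hy1⟩, rfl⟩ | ⟨y, ⟨hy0, hy1⟩, rfl⟩)
    · exact ⟨by positivity, by dsimp only; nlinarith⟩
    · exact ⟨by dsimp only; nlinarith, by dsimp only; nlinarith⟩
  | succ n ih => exact Set.union_subset_union (Set.image_mono ih) (Set.image_mono ih)

theorem one_mem_cantorSetR (r : ℝ) : (1 : ℝ) ∈ cantorSetR r := by
  refine Set.mem_iInter.2 fun n => ?_
  induction n with
  | zero => exact ⟨zero_le_one, le_rfl⟩
  | succ n ih => exact .inr ⟨1, ih, by ring⟩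

/-- Every number in `[0, m]` is a sum of `m` many `a`-th powers of elements of the Cantor set. -/
theorem exists_sum_pow_eq_of_cantorSetR {r : ℝ} (h0 : 0 < r) (h1 : r < 1 / 2) {a m : ℕ}
    (ha : 0 < a) (hm2 : 2 ≤ m) (hm : ((1 - r) / r) ^ a ≤ m) {T : ℝ} (hT0 : 0 ≤ T)
    (hTm : T ≤ m) :
    ∃ x : ℕ → ℝ, (∀ i, x i ∈ cantorSetR r) ∧ ∑ i ∈ Finset.range m, x i ^ a = T := by
  let X (n : ℕ) : Set (ℕ → ℝ) :=
    Set.univ.pi (fun _ => preCantorR r n) ∩ {x | ∑ i ∈ Finset.range m, x i ^ a = T}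
  have hclosed : IsClosed {x : ℕ → ℝ | ∑ i ∈ Finset.range m, x i ^ a = T} :=
    isClosed_eq (by fun_prop) continuous_const
  have hcompact (n) : IsCompact (X n) :=
    (isCompact_univ_pi fun _ => isCompact_preCantorR r n).inter_right hclosed
  obtain ⟨x, hx⟩ := IsCompact.nonempty_iInter_of_sequence_nonempty_isCompact_isClosed X
    (fun n => Set.inter_subset_inter_left _
      (Set.pi_mono fun _ _ => preCantorR_succ_subset h0 h1 n))
    (fun n => by
      obtain ⟨x, hx, hsum⟩ := exists_sum_pow_eq_of_gapComplement h0 h1 hm2 hm hT0 hTm ha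
        (List.finite_length_lt Bool n).toFinset
      exact ⟨x, fun i _ => mem_preCantorR_of_forall_gap h0 n (hx i).1
        fun w hw => (hx i).2 w (by simpa using hw), hsum⟩)
    (hcompact 0) (fun n => (hcompact n).isClosed)
  rw [Set.mem_iInter] at hx
  exact ⟨x, fun i => Set.mem_iInter.2 fun n => (hx n).1 i trivial, (hx 0).2⟩

/-- Fundamental theorem: for `a ≤ b`, `s = a + b ≥ 2` and `k` even and large enough,
`[0, k/2] = f_{k,a,b}(C_α^k)`. -/
theorem stmt_13 (α r : ℝ) (hα : 1 < α) (hr : r = (1 - 1/α) / 2)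
    (a b s : ℕ) (ha : 0 < a) (hb : 0 < b) (hab : a ≤ b) (hs : s = a + b) (hs2 : 2 ≤ s)
    (k : ℕ) (hk : Even k) (hkpos : 0 < k)
    (hkge : (k : ℝ) ≥
      max (max
        ((⌈2 * ((1 - r + r ^ nstar r a) ^ (a - 1) *
              ((b : ℝ) * (1 - r + r ^ nstar r a) + a)) /
            ((1 - r) ^ (a - 1) * (1 - r ^ nstar r a) ^ (b - 1) *
              ((b : ℝ) * (1 - r) + (a : ℝ) * (1 - r ^ nstar r a))) + 2⌉ : ℤ) *
          ((1 - r) / r) ^ a)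
        (2 * ((1 - r) / r) ^ (a + 1)))
        (2 * (1 / (1 - r)) ^ (s - 1) + 2)) :
    Set.Icc (0 : ℝ) ((k : ℝ) / 2) = imageOn a b (k / 2) (cantorSetR r) := by
  have hα0 : 0 < α := by linarith
  have h0 : 0 < r := by
    have : 1 / α < 1 := (div_lt_one hα0).2 hα
    linarith
  have h1 : r < 1 / 2 := by
    have : 0 < 1 / α := by positivity
    linarith
  obtain ⟨m, rfl⟩ := hk
  have hdiv : (m + m) / 2 = m := by omega
  have hcast : ((m + m : ℕ) : ℝ) / 2 = m := by push_cast; ring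
  have hratio : 1 < (1 - r) / r := by rw [lt_div_iff₀ h0]; linarith
  have hm' : ((1 - r) / r) ^ (a + 1) ≤ m := by
    have := (le_max_right _ _).trans ((le_max_left _ _).trans hkge)
    push_cast at this
    linarith
  have hm2 : 2 ≤ m := by
    have h : (1 : ℝ) < m := (one_lt_pow₀ hratio a.succ_ne_zero).trans_le hm'
    exact_mod_cast h
  have hm : ((1 - r) / r) ^ a ≤ m := (pow_le_pow_right₀ hratio.le a.le_succ).trans hm'
  rw [hdiv, hcast]
  ext T
  constructor
  · rintro ⟨hT0, hTm⟩
    obtain ⟨x, hx, hsum⟩ := exists_sum_pow_eq_of_cantorSetR h0 h1 ha hm2 hm hT0 hTm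
    refine ⟨fun j => if Even j then x (j / 2) else 1, fun j => ?_, ?_⟩
    · dsimp only
      split_ifs
      exacts [hx _, one_mem_cantorSetR r]
    · simp [pairSum, ← hsum]
  · rintro ⟨x, hx, rfl⟩
    have hx' (i : ℕ) : x i ∈ Set.Icc (0 : ℝ) 1 := Set.mem_iInter.1 (hx i) 0
    refine ⟨Finset.sum_nonneg fun i _ =>
      mul_nonneg (pow_nonneg (hx' _).1 _) (pow_nonneg (hx' _).1 _), ?_⟩
    calc pairSum a b m x ≤ ∑ _i ∈ Finset.range m, (1 : ℝ) :=
          Finset.sum_le_sum fun i _ => mul_le_one₀ (pow_le_one₀ (hx' _).1 (hx' _).2)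
            (pow_nonneg (hx' _).1 _) (pow_le_one₀ (hx' _).1 (hx' _).2)
      _ = m := by simp
end

section
/- For the Cantor ternary set C, positive integers a, b with s = a + b ≥ 2, and any even k with k ≥ ⌈(1 + 3/(2a))^{a-1}/(1 - 1/a)^{b-1}·(1 + (1 + b/a)/(2b/3 + a - 1)) + 1⌉·2^{a+1}, one has [0, k/2] = { x₁^a x₂^b + x₃^a x₄^b + ⋯ + x_{k-1}^a x_k^b : x₁,…,x_k ∈ C }. -/
/-- The tuples `z` and `d` describe cylinders `z i + d i * C` of the Cantor set inside
`[c, c + δ]` whose images under `f` have sums of endpoints enclosing `t`. -/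
structure CantorBracket (f : ℝ → ℝ) (c δ t : ℝ) (p : ℕ) (z d : ℕ → ℝ) : Prop where
  mem : ∀ i, ∀ w ∈ cantorSet, z i + d i * w ∈ cantorSet
  left_le : ∀ i, c ≤ z i
  le_right : ∀ i, z i + d i ≤ c + δ
  sum_le : ∑ i ∈ Finset.range p, f (z i) ≤ t
  le_sum : t ≤ ∑ i ∈ Finset.range p, f (z i + d i)

theorem preCantorR_third (n : ℕ) : preCantorR (1 / 3) n = preCantorSet n := by
  induction n with
  | zero => rfl
  | succ n ih =>
    rw [preCantorR, preCantorSet_succ, ih]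
    congr 2 <;> funext x <;> ring

theorem cantorTernary_eq_cantorSet : cantorTernary = cantorSet := by
  simp [cantorTernary, cantorSetR, cantorSet, ← preCantorR_third]

theorem div_three_mem_cantorSet {w : ℝ} (hw : w ∈ cantorSet) : w / 3 ∈ cantorSet := by
  rw [cantorSet_eq_union_halves]
  exact Or.inl ⟨w, hw, rfl⟩

theorem two_add_div_three_mem_cantorSet {w : ℝ} (hw : w ∈ cantorSet) :
    (2 + w) / 3 ∈ cantorSet := by
  rw [cantorSet_eq_union_halves]
  exact Or.inr ⟨w, hw, rfl⟩

theorem one_mem_cantorSet : (1 : ℝ) ∈ cantorSet := by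
  have h (n : ℕ) : (1 : ℝ) ∈ preCantorSet n := by
    induction n with
    | zero => simp
    | succ n ih => exact Or.inr ⟨1, ih, by norm_num⟩
  exact Set.mem_iInter.2 h

theorem div_three_pow_mem_cantorSet (n : ℕ) {w : ℝ} (hw : w ∈ cantorSet) :
    w / 3 ^ n ∈ cantorSet := by
  induction n with
  | zero => simpa using hw
  | succ n ih =>
    rw [pow_succ, ← div_div]
    exact div_three_mem_cantorSet ih

theorem two_thirds_add_mem_cantorSet (n : ℕ) {w : ℝ} (hw : w ∈ cantorSet) :
    2 / 3 + 1 / 3 ^ (n + 1) * w ∈ cantorSet := by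
  convert two_add_div_three_mem_cantorSet (div_three_pow_mem_cantorSet n hw) using 1
  field_simp
  ring

theorem one_sub_add_mem_cantorSet (n : ℕ) {w : ℝ} (hw : w ∈ cantorSet) :
    1 - 1 / 3 ^ n + 1 / 3 ^ n * w ∈ cantorSet := by
  induction n with
  | zero => simpa using hw
  | succ n ih =>
    convert two_add_div_three_mem_cantorSet ih using 1
    field_simp
    ring

section Bracket

variable {f : ℝ → ℝ} {c δ μ M t : ℝ} {p : ℕ}

theorem CantorBracket.split
    (hμ : 0 ≤ μ)
    (hlow : ∀ u v, c ≤ u → u ≤ v → v ≤ c + δ → μ * (v - u) ≤ f v - f u)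
    (hup : ∀ u v, c ≤ u → u ≤ v → v ≤ c + δ → f v - f u ≤ M * (v - u))
    (hM : M ≤ (p - 1) * μ) {z d : ℕ → ℝ} (h : CantorBracket f c δ t p z d)
    {e : ℝ} (he : 0 ≤ e) (hd : ∀ i, e / 3 ≤ d i) {j : ℕ} (hj : j < p) (hdj : d j = e) :
    ∃ z', CantorBracket f c δ t p z' (Function.update d j (e / 3)) := by
  have hjm : j ∈ Finset.range p := Finset.mem_range.2 hj
  have hsum (g : ℕ → ℝ) : ∑ i ∈ Finset.range p, g i
      = g j + ∑ i ∈ (Finset.range p).erase j, g i := (Finset.add_sum_erase _ g hjm).symm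
  have hother : ((p : ℝ) - 1) * (μ * (e / 3)) ≤
      ∑ i ∈ (Finset.range p).erase j, (f (z i + d i) - f (z i)) := by
    have h1 : ∑ i ∈ (Finset.range p).erase j, μ * (e / 3)
        ≤ ∑ i ∈ (Finset.range p).erase j, (f (z i + d i) - f (z i)) := by
      refine Finset.sum_le_sum fun i _ => ?_
      have h2 := hlow (z i) (z i + d i) (h.left_le i) (by linarith [hd i]) (h.le_right i)
      have h3 := mul_le_mul_of_nonneg_left (hd i) hμ
      have h4 : z i + d i - z i = d i := by ring
      rw [h4] at h2
      linarith
    rw [Finset.sum_const, Finset.card_erase_of_mem hjm, Finset.card_range, nsmul_eq_mul,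
      Nat.cast_sub (by lia)] at h1
    simpa using h1
  rw [Finset.sum_sub_distrib] at hother
  have hs := h.sum_le
  have hs' := h.le_sum
  rw [hsum] at hs hs'
  have hl := h.left_le j
  have hr := h.le_right j
  rw [hdj] at hs' hr
  have hrest (x y : ℝ) :
      ∑ i ∈ (Finset.range p).erase j, f (Function.update z j x i)
          = ∑ i ∈ (Finset.range p).erase j, f (z i) ∧
      ∑ i ∈ (Finset.range p).erase j, f (Function.update z j x i + Function.update d j y i)
          = ∑ i ∈ (Finset.range p).erase j, f (z i + d i) := by
    constructor <;> refine Finset.sum_congr rfl fun i hi => ?_ <;>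
      simp [Function.update_of_ne (Finset.ne_of_mem_erase hi)]
  have key (x : ℝ) (hx : ∀ w ∈ cantorSet, x + e / 3 * w ∈ cantorSet) (hxc : c ≤ x)
      (hxr : x + e / 3 ≤ c + δ)
      (hx1 : f x + ∑ i ∈ (Finset.range p).erase j, f (z i) ≤ t)
      (hx2 : t ≤ f (x + e / 3) + ∑ i ∈ (Finset.range p).erase j, f (z i + d i)) :
      CantorBracket f c δ t p (Function.update z j x) (Function.update d j (e / 3)) := by
    refine ⟨fun i => ?_, fun i => ?_, fun i => ?_, ?_, ?_⟩
    · by_cases hi : i = j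
      · subst hi; simpa using hx
      · simpa [Function.update_of_ne hi] using h.mem i
    · by_cases hi : i = j
      · subst hi; simpa using hxc
      · simpa [Function.update_of_ne hi] using h.left_le i
    · by_cases hi : i = j
      · subst hi; simpa using hxr
      · simpa [Function.update_of_ne hi] using h.le_right i
    · rw [hsum, (hrest x 0).1]
      simpa using hx1
    · rw [hsum, (hrest x (e / 3)).2]
      simpa using hx2
  have hmem := h.mem j
  rw [hdj] at hmem
  by_cases hc : t ≤ f (z j + e / 3) + ∑ i ∈ (Finset.range p).erase j, f (z i + d i)
  · refine ⟨_, key (z j) (fun w hw => ?_) hl (by linarith) hs hc⟩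
    convert hmem _ (div_three_mem_cantorSet hw) using 1
    ring
  · push Not at hc
    refine ⟨_, key (z j + 2 * e / 3) (fun w hw => ?_) (by linarith) (by linarith) ?_ ?_⟩
    · convert hmem _ (two_add_div_three_mem_cantorSet hw) using 1
      ring
    · have h1 := hup (z j + e / 3) (z j + 2 * e / 3) (by linarith) (by linarith) (by linarith)
      have h2 := mul_le_mul_of_nonneg_right hM (show 0 ≤ e / 3 by positivity)
      have h3 : z j + 2 * e / 3 - (z j + e / 3) = e / 3 := by ring
      rw [h3] at h1
      nlinarith
    · have h3 : z j + 2 * e / 3 + e / 3 = z j + e := by ring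
      rwa [h3]

theorem CantorBracket.refine
    (hμ : 0 ≤ μ)
    (hlow : ∀ u v, c ≤ u → u ≤ v → v ≤ c + δ → μ * (v - u) ≤ f v - f u)
    (hup : ∀ u v, c ≤ u → u ≤ v → v ≤ c + δ → f v - f u ≤ M * (v - u))
    (hM : M ≤ (p - 1) * μ) {z : ℕ → ℝ} {e : ℝ} (he : 0 ≤ e)
    (h : CantorBracket f c δ t p z fun _ => e) :
    ∃ z', CantorBracket f c δ t p z' fun _ => e / 3 := by
  have step (j : ℕ) (hj : j ≤ p) :
      ∃ z', CantorBracket f c δ t p z' fun i => if i < j then e / 3 else e := by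
    induction j with
    | zero => exact ⟨z, by simpa using h⟩
    | succ j ih =>
      obtain ⟨z', hz'⟩ := ih (by lia)
      obtain ⟨y, hy⟩ := hz'.split hμ hlow hup hM he
        (fun i => by split_ifs <;> linarith) (j := j) (by lia) (by simp)
      refine ⟨y, ?_⟩
      convert hy using 1
      funext i
      by_cases hi : i = j
      · subst hi; simp
      · rw [Function.update_of_ne hi]
        have : i < j + 1 ↔ i < j := by lia
        simp [this]
  obtain ⟨z', hz'⟩ := step p le_rfl
  refine ⟨fun i => if i < p then z' i else z' 0, ?_⟩
  rcases Nat.eq_zero_or_pos p with rfl | hp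
  · refine ⟨fun i w hw => ?_, fun i => ?_, fun i => ?_, ?_, ?_⟩
    · have := hz'.mem 0 _ (div_three_mem_cantorSet hw)
      simp only [lt_irrefl, if_false, Nat.not_lt_zero] at this ⊢
      convert this using 1
      ring
    · simpa using hz'.left_le 0
    · have := hz'.le_right 0
      simp only [lt_irrefl, if_false, Nat.not_lt_zero] at this ⊢
      linarith
    · simpa using hz'.sum_le
    · simpa using hz'.le_sum
  · have hs (i : ℕ) : ∃ k < p, (if i < p then z' i else z' 0) = z' k := by
      by_cases hi : i < p
      · exact ⟨i, hi, by simp [hi]⟩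
      · exact ⟨0, hp, by simp [hi]⟩
    refine ⟨fun i w hw => ?_, fun i => ?_, fun i => ?_, ?_, ?_⟩
    · obtain ⟨k, hk, hik⟩ := hs i
      have := hz'.mem k w hw
      simpa only [hik, if_pos hk] using this
    · obtain ⟨k, hk, hik⟩ := hs i
      simpa only [hik] using hz'.left_le k
    · obtain ⟨k, hk, hik⟩ := hs i
      have := hz'.le_right k
      simpa only [hik, if_pos hk] using this
    · refine le_of_eq_of_le (Finset.sum_congr rfl fun i hi => ?_) hz'.sum_le
      simp [Finset.mem_range.1 hi]
    · refine le_of_le_of_eq hz'.le_sum (Finset.sum_congr rfl fun i hi => ?_)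
      simp [Finset.mem_range.1 hi]

/-- If `f` has slopes between `μ` and `M` with `M ≤ (p - 1) * μ`, then the sums of `p` values of
`f` on the Cantor set `c + δ * C` fill an interval. -/
theorem exists_sum_eq_of_slope_bounds (hf : Continuous f) (hδ : 0 ≤ δ)
    (hc : ∀ w ∈ cantorSet, c + δ * w ∈ cantorSet) (hμ : 0 ≤ μ)
    (hlow : ∀ u v, c ≤ u → u ≤ v → v ≤ c + δ → μ * (v - u) ≤ f v - f u)
    (hup : ∀ u v, c ≤ u → u ≤ v → v ≤ c + δ → f v - f u ≤ M * (v - u))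
    (hM : M ≤ (p - 1) * μ) (ht : p * f c ≤ t) (ht' : t ≤ p * f (c + δ)) :
    ∃ x : ℕ → ℝ, (∀ i, x i ∈ cantorSet) ∧ ∑ i ∈ Finset.range p, f (x i) = t := by
  have brackets (n : ℕ) : ∃ z, CantorBracket f c δ t p z fun _ => δ / 3 ^ n := by
    induction n with
    | zero =>
      exact ⟨fun _ => c, ⟨by simpa using hc, fun _ => le_rfl, fun _ => by simp,
        by simpa using ht, by simpa using ht'⟩⟩
    | succ n ih =>
      obtain ⟨z, hz⟩ := ih
      obtain ⟨z', hz'⟩ := hz.refine hμ hlow hup hM (by positivity)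
      exact ⟨z', by simpa only [pow_succ, ← div_div] using hz'⟩
  choose z hz using brackets
  have hcomp : IsCompact (Set.univ.pi fun _ : ℕ => cantorSet) :=
    isCompact_univ_pi fun _ => isCompact_cantorSet
  have hcont : Continuous fun x : ℕ → ℝ => ∑ i ∈ Finset.range p, f (x i) :=
    continuous_finsetSum _ fun i _ => hf.comp (continuous_apply i)
  have hclosed := (hcomp.image hcont).isClosed
  have hlim : Filter.Tendsto (fun n => ∑ i ∈ Finset.range p, f (z n i)) Filter.atTop
      (nhds t) := by
    have h0 : Filter.Tendsto (fun n : ℕ => t - p * (M * (δ / 3 ^ n))) Filter.atTop (nhds t) := by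
      have h1 : Filter.Tendsto (fun n : ℕ => δ * (1 / 3 : ℝ) ^ n) Filter.atTop (nhds (δ * 0)) :=
        (tendsto_pow_atTop_nhds_zero_of_lt_one (by norm_num) (by norm_num)).const_mul δ
      have h2 := ((h1.const_mul M).const_mul (p : ℝ)).const_sub t
      simpa [div_eq_mul_inv] using h2
    refine tendsto_of_tendsto_of_tendsto_of_le_of_le h0 tendsto_const_nhds (fun n => ?_)
      fun n => (hz n).sum_le
    have h3 : ∑ i ∈ Finset.range p, (f (z n i + δ / 3 ^ n) - f (z n i))
        ≤ ∑ i ∈ Finset.range p, M * (δ / 3 ^ n) := by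
      refine Finset.sum_le_sum fun i _ => ?_
      have h4 : 0 ≤ δ / 3 ^ n := by positivity
      simpa using hup (z n i) (z n i + δ / 3 ^ n) ((hz n).left_le i) (by linarith)
        ((hz n).le_right i)
    rw [Finset.sum_sub_distrib, Finset.sum_const, Finset.card_range, nsmul_eq_mul] at h3
    have h5 := (hz n).le_sum
    show t - p * (M * (δ / 3 ^ n)) ≤ ∑ i ∈ Finset.range p, f (z n i)
    linarith
  obtain ⟨x, hx, hxt⟩ := hclosed.mem_of_tendsto hlim (Filter.Eventually.of_forall fun n =>
    ⟨z n, fun i _ => by simpa using (hz n).mem i 0 zero_mem_cantorSet, rfl⟩)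
  exact ⟨x, fun i => hx i trivial, hxt⟩

end Bracket

theorem pow_succ_sub_pow_succ_bounds {l r u v : ℝ} (hl : 0 ≤ l) (hlu : l ≤ u) (huv : u ≤ v)
    (hvr : v ≤ r) (n : ℕ) :
    (n + 1) * l ^ n * (v - u) ≤ v ^ (n + 1) - u ^ (n + 1) ∧
      v ^ (n + 1) - u ^ (n + 1) ≤ (n + 1) * r ^ n * (v - u) := by
  induction n with
  | zero => simp
  | succ n ih =>
    obtain ⟨h1, h2⟩ := ih
    have hd : 0 ≤ v - u := sub_nonneg.2 huv
    have hu : 0 ≤ u := hl.trans hlu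
    have hv : 0 ≤ v := hu.trans huv
    have hr : 0 ≤ r := hv.trans hvr
    have e : v ^ (n + 1 + 1) - u ^ (n + 1 + 1)
        = v * (v ^ (n + 1) - u ^ (n + 1)) + u ^ (n + 1) * (v - u) := by ring
    rw [e]
    push_cast
    constructor
    · have h3 := mul_le_mul (hlu.trans huv) h1 (by positivity) hv
      have h4 := mul_le_mul_of_nonneg_right (pow_le_pow_left₀ hl hlu (n + 1)) hd
      calc _ = l * ((n + 1) * l ^ n * (v - u)) + l ^ (n + 1) * (v - u) := by ring
        _ ≤ _ := add_le_add h3 h4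
    · have h3 := mul_le_mul hvr h2 (sub_nonneg.2 (pow_le_pow_left₀ hu huv _)) hr
      have h4 := mul_le_mul_of_nonneg_right (pow_le_pow_left₀ hu (huv.trans hvr) (n + 1)) hd
      calc _ ≤ r * ((n + 1) * r ^ n * (v - u)) + r ^ (n + 1) * (v - u) := add_le_add h3 h4
        _ = _ := by ring

theorem exists_sum_pow_succ_eq {c δ t : ℝ} {n p : ℕ} (hc0 : 0 ≤ c) (hδ : 0 ≤ δ)
    (hc : ∀ w ∈ cantorSet, c + δ * w ∈ cantorSet)
    (hp : (c + δ) ^ n ≤ (p - 1) * c ^ n)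
    (ht : p * c ^ (n + 1) ≤ t) (ht' : t ≤ p * (c + δ) ^ (n + 1)) :
    ∃ x : ℕ → ℝ, (∀ i, x i ∈ cantorSet) ∧ ∑ i ∈ Finset.range p, x i ^ (n + 1) = t := by
  refine exists_sum_eq_of_slope_bounds (f := fun x => x ^ (n + 1)) (μ := (n + 1) * c ^ n)
    (M := (n + 1) * (c + δ) ^ n) (by fun_prop) hδ hc (by positivity)
    (fun u v hu huv hv => (pow_succ_sub_pow_succ_bounds hc0 hu huv hv n).1)
    (fun u v hu huv hv => (pow_succ_sub_pow_succ_bounds hc0 hu huv hv n).2) ?_ ht ht'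
  calc (n + 1 : ℝ) * (c + δ) ^ n ≤ (n + 1) * ((p - 1) * c ^ n) := by gcongr
    _ = _ := by ring

/-- Padding with zeros: the intervals filled by `q` summands, `p ≤ q ≤ m`, overlap. -/
theorem exists_sum_pow_succ_eq_of_le {c δ t : ℝ} {n p m : ℕ} (hc0 : 2 / 3 ≤ c)
    (hδ : 1 / (3 * (n + 1)) ≤ δ) (hδ' : δ ≤ 1 / (n + 1)) (hc1 : c + δ ≤ 1)
    (hc : ∀ w ∈ cantorSet, c + δ * w ∈ cantorSet)
    (hp3 : 3 ≤ p) (hp : (1 + 3 / (2 * (n + 1 : ℝ))) ^ n + 1 ≤ p) (hpm : p ≤ m)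
    (ht : p * c ^ (n + 1) ≤ t) (ht' : t ≤ m * (c + δ) ^ (n + 1)) :
    ∃ x : ℕ → ℝ, (∀ i, x i ∈ cantorSet) ∧ ∑ i ∈ Finset.range m, x i ^ (n + 1) = t := by
  have hδ0 : 0 ≤ δ := le_trans (by positivity) hδ
  have hc00 : 0 ≤ c := le_trans (by norm_num) hc0
  have hratio : (c + δ) ^ n ≤ (1 + 3 / (2 * (n + 1 : ℝ))) ^ n * c ^ n := by
    rw [← mul_pow]
    refine pow_le_pow_left₀ (by positivity) ?_ n
    have h1 : 3 / (2 * (n + 1 : ℝ)) * (2 / 3) ≤ 3 / (2 * (n + 1 : ℝ)) * c := by gcongr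
    have h2 : 3 / (2 * (n + 1 : ℝ)) * (2 / 3) = 1 / (n + 1) := by field_simp
    linarith
  have hoverlap (q : ℕ) (hq : 3 ≤ q) : (q + 1 : ℝ) * c ^ (n + 1) ≤ q * (c + δ) ^ (n + 1) := by
    have h1 := (pow_succ_sub_pow_succ_bounds hc00 le_rfl
      (show c ≤ c + δ by linarith) le_rfl n).1
    have h2 : 1 / 3 ≤ (n + 1) * δ := by
      calc (1 / 3 : ℝ) = (n + 1) * (1 / (3 * (n + 1))) := by field_simp
        _ ≤ _ := by gcongr
    have hq' : (3 : ℝ) ≤ q := by exact_mod_cast hq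
    have h3 : c ^ (n + 1) ≤ c ^ n := by
      rw [pow_succ]
      exact mul_le_of_le_one_right (by positivity) (by linarith)
    have h4 : c ^ n * (1 / 3) ≤ c ^ n * ((n + 1) * δ) := by gcongr
    have h5 : c ^ n / 3 ≤ (c + δ) ^ (n + 1) - c ^ (n + 1) := by
      have : (n + 1) * c ^ n * (c + δ - c) = c ^ n * ((n + 1) * δ) := by ring
      linarith
    have h6 : 3 * (c ^ n / 3) ≤ q * ((c + δ) ^ (n + 1) - c ^ (n + 1)) := by gcongr
    linarith
  obtain ⟨q, hpq, hqm, hq1, hq2⟩ : ∃ q : ℕ, p ≤ q ∧ q ≤ m ∧ q * c ^ (n + 1) ≤ t ∧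
      t ≤ q * (c + δ) ^ (n + 1) := by
    induction m, hpm using Nat.le_induction with
    | base => exact ⟨p, le_rfl, le_rfl, ht, ht'⟩
    | succ k hk ih =>
      by_cases h : t ≤ k * (c + δ) ^ (n + 1)
      · obtain ⟨q, h1, h2, h3⟩ := ih h
        exact ⟨q, h1, by lia, h3⟩
      · refine ⟨k + 1, by lia, le_rfl, ?_, ht'⟩
        push_cast
        linarith [hoverlap k (by lia)]
  obtain ⟨x, hx, hxt⟩ := exists_sum_pow_succ_eq hc00 hδ0 hc (p := q) (n := n) (hratio.trans (by
    have : (p : ℝ) ≤ q := by exact_mod_cast hpq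
    gcongr
    linarith)) hq1 hq2
  refine ⟨fun i => if i < q then x i else 0, fun i => ?_, ?_⟩
  · dsimp only
    split_ifs
    exacts [hx i, zero_mem_cantorSet]
  · rw [← hxt, ← Finset.sum_subset (Finset.range_subset_range.2 hqm)]
    · exact Finset.sum_congr rfl fun i hi => by simp [Finset.mem_range.1 hi]
    · intro i _ hi
      simp [Finset.mem_range.not.1 hi]

/-- A Waring-type statement on the Cantor set. -/
theorem exists_sum_pow_succ_eq_of_mem_Icc {n p m : ℕ}
    (hp3 : 3 ≤ p) (hp : (1 + 3 / (2 * (n + 1 : ℝ))) ^ n + 1 ≤ p) (hpm : p * 2 ^ (n + 1) ≤ m)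
    {t : ℝ} (ht : t ∈ Set.Icc (0 : ℝ) m) :
    ∃ x : ℕ → ℝ, (∀ i, x i ∈ cantorSet) ∧ ∑ i ∈ Finset.range m, x i ^ (n + 1) = t := by
  have hpm' : p ≤ m := le_trans (Nat.le_mul_of_pos_right p (by positivity)) hpm
  have hpmR : (p : ℝ) * 2 ^ (n + 1) ≤ m := by exact_mod_cast hpm
  have large {s : ℝ} (hs : m / 3 ^ (n + 1) ≤ s) (hs' : s ≤ m) :
      ∃ x : ℕ → ℝ, (∀ i, x i ∈ cantorSet) ∧ ∑ i ∈ Finset.range m, x i ^ (n + 1) = s := by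
    obtain ⟨k, hk, hk'⟩ := exists_nat_pow_near (x := (n + 1 : ℝ)) (y := 3) (by simp) (by norm_num)
    have hδ : 1 / (3 * (n + 1 : ℝ)) ≤ 1 / 3 ^ (k + 1) := by
      apply one_div_le_one_div_of_le (by positivity)
      rw [pow_succ]
      linarith
    have hδ' : 1 / 3 ^ (k + 1) ≤ 1 / (n + 1 : ℝ) :=
      one_div_le_one_div_of_le (by positivity) hk'.le
    have hδ3 : 1 / 3 ^ (k + 1) ≤ (1 / 3 : ℝ) := by
      apply one_div_le_one_div_of_le (by positivity)
      rw [pow_succ]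
      linarith [one_le_pow₀ (n := k) (show (1 : ℝ) ≤ 3 by norm_num)]
    have hδ0 : (0 : ℝ) ≤ 1 / 3 ^ (k + 1) := by positivity
    by_cases h : s ≤ m * (2 / 3 + 1 / 3 ^ (k + 1)) ^ (n + 1)
    · refine exists_sum_pow_succ_eq_of_le le_rfl hδ hδ' (by linarith)
        (fun w hw => two_thirds_add_mem_cantorSet k hw) hp3 hp hpm' (le_trans ?_ hs) h
      rw [div_pow, mul_div_assoc']
      gcongr
    · refine exists_sum_pow_succ_eq_of_le (c := 1 - 1 / 3 ^ (k + 1)) (by linarith) hδ hδ'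
        (by linarith) (fun w hw => one_sub_add_mem_cantorSet (k + 1) hw) hp3 hp hpm' ?_
        (by simpa using hs')
      have h1 : (1 - 1 / 3 ^ (k + 1) : ℝ) ^ (n + 1) ≤ 1 :=
        pow_le_one₀ (by linarith) (by linarith)
      have h2 : (1 : ℝ) ≤ (4 / 3) ^ (n + 1) := one_le_pow₀ (by norm_num)
      have h3 : (2 / 3 : ℝ) ^ (n + 1) ≤ (2 / 3 + 1 / 3 ^ (k + 1)) ^ (n + 1) := by
        gcongr
        linarith
      calc (p : ℝ) * (1 - 1 / 3 ^ (k + 1)) ^ (n + 1) ≤ p * (4 / 3) ^ (n + 1) := by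
            exact mul_le_mul_of_nonneg_left (h1.trans h2) p.cast_nonneg
        _ = p * 2 ^ (n + 1) * (2 / 3) ^ (n + 1) := by
            rw [mul_assoc, ← mul_pow]; norm_num
        _ ≤ m * (2 / 3 + 1 / 3 ^ (k + 1)) ^ (n + 1) := by gcongr
        _ ≤ s := (not_le.1 h).le
  obtain ⟨ht0, htm⟩ := ht
  rcases ht0.eq_or_lt with rfl | htpos
  · exact ⟨fun _ => 0, fun _ => zero_mem_cantorSet, by simp⟩
  have hm0 : (0 : ℝ) < m := htpos.trans_le htm
  obtain ⟨j, hj, hj'⟩ := exists_nat_pow_near (x := (m : ℝ) / t) (y := 3 ^ (n + 1))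
    ((one_le_div htpos).2 htm) (one_lt_pow₀ (by norm_num) (by simp))
  rw [le_div_iff₀ htpos] at hj
  rw [div_lt_iff₀ htpos] at hj'
  obtain ⟨x, hx, hxt⟩ := large (s := (3 ^ (n + 1)) ^ j * t) (by
    rw [div_le_iff₀ (by positivity)]
    calc (m : ℝ) ≤ _ := hj'.le
      _ = _ := by ring) hj
  refine ⟨fun i => x i / 3 ^ j, fun i => div_three_pow_mem_cantorSet j (hx i), ?_⟩
  simp_rw [div_pow]
  rw [← Finset.sum_div, hxt, pow_right_comm]
  field_simp

theorem pairSum_mem_Icc {a b m : ℕ} {x : ℕ → ℝ} (hx : ∀ i, x i ∈ cantorSet) :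
    pairSum a b m x ∈ Set.Icc (0 : ℝ) m := by
  have h0 (i : ℕ) : 0 ≤ x i := (cantorSet_subset_unitInterval (hx i)).1
  have h1 (i : ℕ) : x i ≤ 1 := (cantorSet_subset_unitInterval (hx i)).2
  refine ⟨Finset.sum_nonneg fun i _ => mul_nonneg (pow_nonneg (h0 _) _) (pow_nonneg (h0 _) _), ?_⟩
  calc pairSum a b m x ≤ ∑ i ∈ Finset.range m, (1 : ℝ) := Finset.sum_le_sum fun i _ =>
        mul_le_one₀ (pow_le_one₀ (h0 _) (h1 _)) (pow_nonneg (h0 _) _) (pow_le_one₀ (h0 _) (h1 _))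
    _ = m := by simp

theorem exists_pairSum_eq_sum_pow {a m : ℕ} (b : ℕ) {u : ℕ → ℝ} (hu : ∀ i, u i ∈ cantorSet) :
    ∃ x : ℕ → ℝ, (∀ i, x i ∈ cantorSet) ∧ ∑ i ∈ Finset.range m, u i ^ a = pairSum a b m x := by
  refine ⟨fun i => if i % 2 = 0 then u (i / 2) else 1, fun i => ?_, ?_⟩
  · dsimp only
    split_ifs
    exacts [hu _, one_mem_cantorSet]
  · refine Finset.sum_congr rfl fun i _ => ?_
    have h1 : (2 * i + 1) % 2 = 1 := by lia
    simp [h1]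

/-- The Cantor ternary case: for `k` even with
`k ≥ ⌈(1+3/(2a))^{a-1}/(1-1/a)^{b-1}·(1+(1+b/a)/(2b/3+a-1)) + 1⌉·2^{a+1}`,
`[0, k/2] = {x₁^a x₂^b + ⋯ + x_{k-1}^a x_k^b : x_i ∈ C}`. -/
theorem stmt_14 (a b s : ℕ) (ha : 0 < a) (hb : 0 < b) (hs : s = a + b) (hs2 : 2 ≤ s)
    (k : ℕ) (hk : Even k) (hkpos : 0 < k)
    (hkge : (k : ℝ) ≥
      (⌈(1 + 3 / (2 * (a : ℝ))) ^ (a - 1) / (1 - 1 / (a : ℝ)) ^ (b - 1) *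
          (1 + (1 + (b : ℝ) / a) / ((b : ℝ) * (2 / 3) + (a : ℝ) - 1)) + 1⌉ : ℤ) *
        2 ^ (a + 1)) :
    Set.Icc (0 : ℝ) ((k : ℝ) / 2) = imageOn a b (k / 2) cantorTernary := by
  obtain ⟨m, rfl⟩ := hk
  have hm : (m + m) / 2 = m := by lia
  have hmR : ((m + m : ℕ) : ℝ) / 2 = m := by push_cast; ring
  rw [hm, hmR, cantorTernary_eq_cantorSet]
  refine Set.Subset.antisymm (fun t ht => ?_) ?_
  swap
  · rintro _ ⟨x, hx, rfl⟩
    exact pairSum_mem_Icc hx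
  suffices h : ∃ u : ℕ → ℝ, (∀ i, u i ∈ cantorSet) ∧ ∑ i ∈ Finset.range m, u i ^ a = t by
    obtain ⟨u, hu, rfl⟩ := h
    exact exists_pairSum_eq_sum_pow b hu
  obtain ⟨n, rfl⟩ : ∃ n, a = n + 1 := ⟨a - 1, by lia⟩
  set Q : ℝ := (1 + 3 / (2 * ((n + 1 : ℕ) : ℝ))) ^ (n + 1 - 1) /
    (1 - 1 / ((n + 1 : ℕ) : ℝ)) ^ (b - 1) * (1 + (1 + (b : ℝ) / ((n + 1 : ℕ) : ℝ)) /
      ((b : ℝ) * (2 / 3) + ((n + 1 : ℕ) : ℝ) - 1)) with hQ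
  have hnn : (0 : ℝ) ≤ 1 - 1 / ((n + 1 : ℕ) : ℝ) := by
    rw [sub_nonneg, div_le_one (by positivity)]
    simp
  have hfrac : (0 : ℝ) ≤ (1 + (b : ℝ) / ((n + 1 : ℕ) : ℝ)) /
      ((b : ℝ) * (2 / 3) + ((n + 1 : ℕ) : ℝ) - 1) := by
    refine div_nonneg (by positivity) ?_
    push_cast
    have : (0 : ℝ) ≤ b * (2 / 3) + n := by positivity
    linarith
  have hQ0 : 0 ≤ Q := mul_nonneg (div_nonneg (by positivity) (pow_nonneg hnn _)) (by linarith)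
  obtain ⟨p, hp⟩ := Int.eq_ofNat_of_zero_le (Int.ceil_nonneg (show 0 ≤ Q + 1 by linarith))
  have hpQ : Q + 1 ≤ p := by
    have := Int.le_ceil (Q + 1)
    rw [hp] at this
    exact_mod_cast this
  have hpm : p * 2 ^ (n + 1) ≤ m := by
    rw [hp] at hkge
    have h1 : p * 2 ^ (n + 1 + 1) ≤ m + m := by exact_mod_cast hkge
    rw [pow_succ 2 (n + 1)] at h1
    lia
  rcases Nat.eq_zero_or_pos n with rfl | hn
  · have hp1 : 1 ≤ p := by
      have : (1 : ℝ) ≤ p := by linarith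
      exact_mod_cast this
    have hm2 : (2 : ℝ) ≤ m := by
      have : 2 ≤ m := by lia
      exact_mod_cast this
    refine exists_sum_pow_succ_eq (c := 0) (δ := 1) le_rfl zero_le_one
      (fun w hw => by simpa using hw) ?_ ?_ ?_
    · simp only [pow_zero]
      linarith
    · simpa using ht.1
    · simpa using ht.2
  · have hR : (1 + 3 / (2 * (n + 1 : ℝ))) ^ n ≤ Q := by
      have hd : (0 : ℝ) < 1 - 1 / ((n + 1 : ℕ) : ℝ) := by
        rw [sub_pos, div_lt_one (by positivity)]
        exact_mod_cast (by lia : 1 < n + 1)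
      have hd' : (1 - 1 / ((n + 1 : ℕ) : ℝ)) ^ (b - 1) ≤ 1 :=
        pow_le_one₀ hnn (sub_le_self _ (by positivity))
      have h1 := le_div_self (a := (1 + 3 / (2 * ((n + 1 : ℕ) : ℝ))) ^ (n + 1 - 1))
        (by positivity) (pow_pos hd _) hd'
      refine le_trans ?_ (h1.trans (le_mul_of_one_le_right (le_trans (by positivity) h1)
        (by linarith)))
      simp
    have hn1 : (1 : ℝ) ≤ n := by exact_mod_cast hn
    have hbern : (7 / 4 : ℝ) ≤ (1 + 3 / (2 * (n + 1 : ℝ))) ^ n := by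
      have h0 : (0 : ℝ) ≤ 3 / (2 * (n + 1 : ℝ)) := by positivity
      refine le_trans ?_ (one_add_mul_le_pow (by linarith) n)
      have : (3 / 4 : ℝ) ≤ n * (3 / (2 * (n + 1 : ℝ))) := by
        rw [mul_div_assoc', div_le_div_iff₀ (by norm_num) (by positivity)]
        linarith
      linarith
    refine exists_sum_pow_succ_eq_of_mem_Icc ?_ (by linarith) hpm ht
    have h2 : (2 : ℝ) < p := by linarith
    have h2' : 2 < p := by exact_mod_cast h2
    exact h2'
end
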